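/- arXiv:2007.08967 — 3 statements merged into one kernel-verified Lean document; each statement's English description precedes it below -/
import Mathlib

section
/- Let G be a group and ψ: G → G an abelian endomorphism. Then for all g, k ∈ G, conjugation by the left translation λ(k) satisfies λ(k) ∘ η_g ∘ λ(k)⁻¹ = η_{k g ψ(g)⁻¹ k⁻¹ ψ(g)}. -/
/-!
The map `η_g` is left translation by `g ψ(g)⁻¹` composed with right translation by `ψ(g)`.
Left and right translations commute, so conjugating by `λ(k)` replaces the left factor by
`k g ψ(g)⁻¹ k⁻¹` and keeps the right one. The result is again of the form `η_x`, with
`x = k g ψ(g)⁻¹ k⁻¹ ψ(g)`, as soon as `ψ(x) = ψ(g)`; this holds because `ψ` does not see the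
conjugation by `k` of an element whose image commutes with `ψ(k)`.
-/

theorem map_conj_of_commute {G H : Type*} [Group G] [Monoid H] (f : G →* H) {k a : G}
    (h : Commute (f k) (f a)) : f (k * a * k⁻¹) = f a := by
  rw [map_mul, map_mul, h.eq, mul_assoc, ← map_mul, mul_inv_cancel, map_one, mul_one]

section

variable {G : Type*} [Group G]

theorem commute_mulLeft_mulRight (a b : G) : Commute (Equiv.mulLeft a) (Equiv.mulRight b) :=
  Equiv.ext fun x ↦ (mul_assoc a x b).symm

theorem mulLeft_conj_mulLeft_mul_mulRight (k a b : G) :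
    Equiv.mulLeft k * (Equiv.mulLeft a * Equiv.mulRight b) * (Equiv.mulLeft k)⁻¹ =
      Equiv.mulLeft (k * a * k⁻¹) * Equiv.mulRight b := by
  calc
    _ = Equiv.mulLeft k * Equiv.mulLeft a * (Equiv.mulRight b * Equiv.mulLeft k⁻¹) := by
      simp only [Equiv.inv_mulLeft, mul_assoc]
    _ = Equiv.mulLeft k * Equiv.mulLeft a * (Equiv.mulLeft k⁻¹ * Equiv.mulRight b) := by
      rw [(commute_mulLeft_mulRight k⁻¹ b).eq]
    _ = Equiv.mulLeft (k * a * k⁻¹) * Equiv.mulRight b := by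
      simp only [Equiv.mulLeft_mul, mul_assoc]

theorem eta_conj_mulLeft_general (ψ : G →* G) (η : G → Equiv.Perm G)
    (hη : ∀ g h : G, η g h = g * (ψ g)⁻¹ * h * ψ g) {g k : G}
    (hcomm : Commute (ψ k) (ψ (g * (ψ g)⁻¹))) :
    Equiv.mulLeft k * η g * (Equiv.mulLeft k)⁻¹ = η (k * g * (ψ g)⁻¹ * k⁻¹ * ψ g) := by
  have η_eq (x : G) : η x = Equiv.mulLeft (x * (ψ x)⁻¹) * Equiv.mulRight (ψ x) :=
    Equiv.ext fun y ↦ (hη x y).trans (mul_assoc _ y _)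
  have map_index : ψ (k * (g * (ψ g)⁻¹) * k⁻¹ * ψ g) = ψ g := by
    rw [map_mul, map_conj_of_commute ψ hcomm, ← map_mul, inv_mul_cancel_right]
  rw [η_eq g, mulLeft_conj_mulLeft_mul_mulRight, mul_assoc k g, η_eq, map_index,
    mul_inv_cancel_right]

end

/-- For an abelian endomorphism `ψ` of a group `G`, conjugating `η_g`
by the left translation `λ(k)` gives `λ(k) ∘ η_g ∘ λ(k)⁻¹ = η_{k g ψ(g)⁻¹ k⁻¹ ψ(g)}`. -/
theorem eta_conj_mulLeft {G : Type*} [Group G]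
    (ψ : G →* G) (hab : ∀ x y : G, ψ x * ψ y = ψ y * ψ x)
    (η : G → Equiv.Perm G)
    (hη : ∀ g h : G, η g h = g * (ψ g)⁻¹ * h * ψ g) :
    ∀ g k : G,
      (Equiv.mulLeft k) * η g * (Equiv.mulLeft k)⁻¹ = η (k * g * (ψ g)⁻¹ * k⁻¹ * ψ g) :=
  fun _ _ ↦ eta_conj_mulLeft_general ψ η hη (hab _ _)
end

section
/- Let G be a group with center Z(G), and let ψ₁, ψ₂: G → G be abelian endomorphisms. Then N_{ψ₁} = N_{ψ₂} (as subsets of Perm(G)) if and only if ψ₂(g) ψ₁(g⁻¹) ∈ Z(G) for all g ∈ G. -/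
/-! Since `η_g(1) = g`, evaluation at `1` is a common left inverse of the parametrizations
`g ↦ η_g` of `N_{ψ₁}` and `N_{ψ₂}`, so the two sets agree only if the parametrizations agree
pointwise. As `η_g` is conjugation by `ψ(g)⁻¹` followed by left translation by `g`, pointwise
agreement says that `ψ₁(g)` and `ψ₂(g)` induce the same inner automorphism, i.e. differ by a
central element. -/

theorem range_eq_range_iff_of_leftInverse {α β : Type*} {e : β → α} {f₁ f₂ : α → β}
    (h₁ : Function.LeftInverse e f₁) (h₂ : Function.LeftInverse e f₂) :
    Set.range f₁ = Set.range f₂ ↔ f₁ = f₂ := by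
  refine ⟨fun hrange ↦ funext fun a ↦ ?_, congrArg Set.range⟩
  obtain ⟨b, hb⟩ : f₁ a ∈ Set.range f₂ := hrange ▸ Set.mem_range_self a
  have hba : b = a := by rw [← h₂ b, hb, h₁ a]
  rw [← hb, hba]

section Group

variable {G : Type*} [Group G]

theorem ker_mulAut_conj : (MulAut.conj : G →* MulAut G).ker = Subgroup.center G := by
  ext a
  simp only [MonoidHom.mem_ker, MulEquiv.ext_iff, MulAut.conj_apply, MulAut.one_apply,
    mul_inv_eq_iff_eq_mul, Subgroup.mem_center_iff, eq_comm (a := a * _)]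

theorem mulAut_conj_eq_conj_iff {a b : G} :
    MulAut.conj a = MulAut.conj b ↔ a / b ∈ Subgroup.center G := by
  rw [← ker_mulAut_conj, MonoidHom.div_mem_ker_iff]

/-- The permutation `η_g : h ↦ g ψ(g)⁻¹ h ψ(g)` of `G`, so that `N_ψ` is `Set.range (eta ψ)`.
It is encoded as an inner automorphism followed by a left translation, which makes it bijective. -/
def eta (ψ : G → G) (g : G) : Equiv.Perm G :=
  Equiv.mulLeft g * MulAut.toPerm G (MulAut.conj (ψ g))⁻¹

theorem eta_apply (ψ : G → G) (g h : G) : eta ψ g h = g * (ψ g)⁻¹ * h * ψ g := by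
  calc eta ψ g h = g * ((MulAut.conj (ψ g))⁻¹ h) := rfl
    _ = g * (ψ g)⁻¹ * h * ψ g := by simp only [MulAut.conj_inv_apply, mul_assoc]

theorem eq_eta_of_forall_apply_eq {ψ : G → G} {η : G → Equiv.Perm G}
    (hη : ∀ g h : G, η g h = g * (ψ g)⁻¹ * h * ψ g) : η = eta ψ :=
  funext fun g ↦ Equiv.ext fun h ↦ (hη g h).trans (eta_apply ψ g h).symm

theorem leftInverse_eval_one_eta (ψ : G → G) :
    Function.LeftInverse (fun σ : Equiv.Perm G ↦ σ 1) (eta ψ) := fun g ↦ by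
  simp only [eta_apply, mul_one, inv_mul_cancel_right]

theorem eta_apply_eq_eta_apply_iff {ψ₁ ψ₂ : G → G} {g : G} :
    eta ψ₁ g = eta ψ₂ g ↔ ψ₂ g / ψ₁ g ∈ Subgroup.center G := by
  have toPerm_injective : Function.Injective (MulAut.toPerm G) :=
    MulEquiv.toEquiv_injective
  rw [eta, eta, mul_right_inj, toPerm_injective.eq_iff, inv_inj, eq_comm,
    mulAut_conj_eq_conj_iff]

theorem range_eta_eq_iff_central_general (ψ₁ ψ₂ : G → G) :
    Set.range (eta ψ₁) = Set.range (eta ψ₂) ↔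
      ∀ g : G, ψ₂ g / ψ₁ g ∈ Subgroup.center G := by
  rw [range_eq_range_iff_of_leftInverse (leftInverse_eval_one_eta ψ₁)
    (leftInverse_eval_one_eta ψ₂), funext_iff]
  exact forall_congr' fun _ ↦ eta_apply_eq_eta_apply_iff

end Group

/-- For abelian endomorphisms `ψ₁, ψ₂` of a group `G`,
`N_{ψ₁} = N_{ψ₂}` (as subsets of `Perm G`) iff `ψ₂(g) ψ₁(g⁻¹) ∈ Z(G)` for all `g ∈ G`. -/
theorem range_eta_eq_iff_central {G : Type*} [Group G]
    (ψ₁ ψ₂ : G →* G)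
    (hab₁ : ∀ x y : G, ψ₁ x * ψ₁ y = ψ₁ y * ψ₁ x)
    (hab₂ : ∀ x y : G, ψ₂ x * ψ₂ y = ψ₂ y * ψ₂ x)
    (η₁ η₂ : G → Equiv.Perm G)
    (hη₁ : ∀ g h : G, η₁ g h = g * (ψ₁ g)⁻¹ * h * ψ₁ g)
    (hη₂ : ∀ g h : G, η₂ g h = g * (ψ₂ g)⁻¹ * h * ψ₂ g) :
    Set.range η₁ = Set.range η₂ ↔
      ∀ g : G, ψ₂ g * ψ₁ (g⁻¹) ∈ Subgroup.center G := by
  simpa only [eq_eta_of_forall_apply_eq hη₁, eq_eta_of_forall_apply_eq hη₂, map_inv,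
    ← div_eq_mul_inv] using range_eta_eq_iff_central_general ψ₁ ψ₂
end

section
/- Let G be a group and ψ: G → G an abelian endomorphism. Define R₁, R₂: G × G → G × G by R₁(g,h) = (ψ(g⁻¹) h ψ(g), ψ(hg⁻¹) h⁻¹ ψ(g) g ψ(g⁻¹) h ψ(gh⁻¹)) and R₂(g,h) = (g ψ(g⁻¹) h ψ(g) g⁻¹, ψ(h) g ψ(h⁻¹)). Then R₁ and R₂ each satisfy the set-theoretic Yang–Baxter (braid) equation (R×id)(id×R)(R×id) = (id×R)(R×id)(id×R) on G × G × G, and R₁ ∘ R₂ = id = R₂ ∘ R₁. -/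
/-- `R × id` acting on the first two coordinates of `B × B × B`. -/
def ybL {B : Type*} (R : B × B → B × B) : B × B × B → B × B × B :=
  fun p => ((R (p.1, p.2.1)).1, (R (p.1, p.2.1)).2, p.2.2)

/-- `id × R` acting on the last two coordinates of `B × B × B`. -/
def ybR {B : Type*} (R : B × B → B × B) : B × B × B → B × B × B :=
  fun p => (p.1, R p.2)

/-- `R` is a set-theoretic solution to the Yang–Baxter (braid) equation. -/
def IsYangBaxterSolution {B : Type*} (R : B × B → B × B) : Prop :=
  (ybL R) ∘ (ybR R) ∘ (ybL R) = (ybR R) ∘ (ybL R) ∘ (ybR R)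

/-!
The operation `g ∘ h = g ψ(g)⁻¹ h ψ(g)` is an associative and cancellative product on `G`, and
`R₂ (g, h) = (g ▷ h, g ◁ h)`, where `g ▷ h` is the conjugate of `h` by `g ψ(g)⁻¹` and `g ◁ h` is
the conjugate of `g` by `ψ(h)`. These are a left and a right action of `(G, ∘)` with
`(g ▷ h) ∘ (g ◁ h) = g ∘ h`, which by an argument of Lu, Yan and Zhu forces the braid equation:
the outer coordinates of its two sides agree because `▷` and `◁` are actions, and the middle ones
then agree by cancellation. Finally `R₁` is the inverse of `R₂`, and the inverse of a solution is
a solution.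
-/

open Function

section Inverse

variable {B : Type*} {R S : B × B → B × B}

theorem leftInverse_ybL (h : LeftInverse S R) : LeftInverse (ybL S) (ybL R) := fun p => by
  simp only [ybL, Prod.mk.eta, h (p.1, p.2.1)]

theorem leftInverse_ybR (h : LeftInverse S R) : LeftInverse (ybR S) (ybR R) := fun p => by
  simp only [ybR, h p.2, Prod.mk.eta]

theorem IsYangBaxterSolution.of_inverse (hR : IsYangBaxterSolution R)
    (hl : LeftInverse S R) (hr : RightInverse S R) : IsYangBaxterSolution S := by
  have left : LeftInverse (ybL S ∘ ybR S ∘ ybL S) (ybL R ∘ ybR R ∘ ybL R) :=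
    ((leftInverse_ybL hl).comp (leftInverse_ybR hl)).comp (leftInverse_ybL hl)
  have right : RightInverse (ybR S ∘ ybL S ∘ ybR S) (ybR R ∘ ybL R ∘ ybR R) :=
    ((leftInverse_ybR hr).comp (leftInverse_ybL hr)).comp (leftInverse_ybR hr)
  rw [← hR] at right
  exact left.eq_rightInverse right

end Inverse

theorem isYangBaxterSolution_of_actions {M : Type*} {op l r : M → M → M}
    (op_assoc : ∀ x y z, op (op x y) z = op x (op y z))
    (op_left_injective : ∀ y, Injective fun x => op x y)
    (op_right_injective : ∀ x, Injective (op x))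
    (l_op : ∀ x y z, l (op x y) z = l x (l y z))
    (r_op : ∀ x y z, r x (op y z) = r (r x y) z)
    (op_l_r : ∀ x y, op (l x y) (r x y) = op x y) :
    IsYangBaxterSolution fun p : M × M => (l p.1 p.2, r p.1 p.2) := by
  funext ⟨x, y, z⟩
  have first : l (l x y) (l (r x y) z) = l x (l y z) := by rw [← l_op, op_l_r, l_op]
  have third : r (r x y) z = r (r x (l y z)) (r y z) := by rw [← r_op, ← r_op, op_l_r]
  have middle : r (l x y) (l (r x y) z) = l (r x (l y z)) (r y z) := by
    apply op_left_injective (r (r x y) z)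
    apply op_right_injective (l (l x y) (l (r x y) z))
    calc op (l (l x y) (l (r x y) z)) (op (r (l x y) (l (r x y) z)) (r (r x y) z))
      _ = op (l x y) (op (r x y) z) := by rw [← op_assoc, op_l_r, op_assoc, op_l_r]
      _ = op x (op y z) := by rw [← op_assoc, op_l_r, op_assoc]
      _ = op (op x (l y z)) (r y z) := by rw [op_assoc, op_l_r]
      _ = op (l x (l y z)) (op (l (r x (l y z)) (r y z)) (r (r x (l y z)) (r y z))) := by
        rw [← op_l_r x, op_assoc, op_l_r (r x (l y z))]
      _ = op (l (l x y) (l (r x y) z)) (op (l (r x (l y z)) (r y z)) (r (r x y) z)) := by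
        rw [first, third]
  exact Prod.ext first (Prod.ext middle third)

theorem map_conj_of_commute_s12 {G M : Type*} [Group G] [Monoid M] {f : G →* M}
    (hf : ∀ x y, Commute (f x) (f y)) (g h : G) : f (MulAut.conj g h) = f h := by
  rw [MulAut.conj_apply, map_mul, map_mul, (hf g h).eq, mul_assoc, ← map_mul, mul_inv_cancel,
    map_one, mul_one]

section AbelianEndomorphism

variable {G : Type*} [Group G] (ψ : G →* G)

/-- The map `g ↦ g ψ(g)⁻¹`, which for abelian `ψ` is a homomorphism from `circleMul ψ` to the
multiplication of `G`. -/
def divMap (g : G) : G := g * (ψ g)⁻¹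

/-- The second product `g ∘ h = g ψ(g)⁻¹ h ψ(g)` on `G`, which for abelian `ψ` makes `G` into a
skew brace. -/
def circleMul (g h : G) : G := divMap ψ g * h * ψ g

/-- The solution `R₂`, with both coordinates written as conjugates. -/
def braiding (p : G × G) : G × G := (MulAut.conj (divMap ψ p.1) p.2, MulAut.conj (ψ p.2) p.1)

/-- The inverse of `braiding ψ` for abelian `ψ`: since `ψ` does not distinguish conjugates,
`(s, t) = braiding ψ (g, h)` has `ψ s = ψ h`, so `g` is recovered from `t` and `ψ s`, and then `h`
from `s` and `g`. -/
def braidingInv (p : G × G) : G × G :=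
  (MulAut.conj (ψ p.1)⁻¹ p.2, MulAut.conj (divMap ψ (MulAut.conj (ψ p.1)⁻¹ p.2))⁻¹ p.1)

theorem circleMul_eq_conj_mul (g h : G) :
    circleMul ψ g h = MulAut.conj (divMap ψ g) h * g := by
  simp only [circleMul, divMap, MulAut.conj_apply, mul_inv_rev, inv_inv, mul_assoc,
    inv_mul_cancel, mul_one]

theorem circleMul_right_injective (g : G) : Injective (circleMul ψ g) :=
  (mul_left_injective (ψ g)).comp (mul_right_injective (divMap ψ g))

variable {ψ} (hψ : ∀ x y, Commute (ψ x) (ψ y))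
include hψ

theorem map_circleMul (g h : G) : ψ (circleMul ψ g h) = ψ h * ψ g := by
  rw [circleMul_eq_conj_mul, map_mul, map_conj_of_commute_s12 hψ]

theorem divMap_circleMul (g h : G) : divMap ψ (circleMul ψ g h) = divMap ψ g * divMap ψ h := by
  rw [divMap, map_circleMul hψ, circleMul, divMap, divMap]
  group

theorem circleMul_assoc (g h k : G) :
    circleMul ψ (circleMul ψ g h) k = circleMul ψ g (circleMul ψ h k) := by
  rw [circleMul, divMap_circleMul hψ, map_circleMul hψ]
  simp only [circleMul, mul_assoc]

theorem circleMul_left_injective (h : G) : Injective fun g => circleMul ψ g h := by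
  intro g g' (eq : circleMul ψ g h = circleMul ψ g' h)
  have map_eq : ψ g = ψ g' := by
    simpa only [map_circleMul hψ, mul_right_inj] using congrArg ψ eq
  simpa only [circleMul, divMap, map_eq, mul_left_inj] using eq

theorem circleMul_braiding (g h : G) :
    circleMul ψ (braiding ψ (g, h)).1 (braiding ψ (g, h)).2 = circleMul ψ g h := by
  have map_fst : ψ (MulAut.conj (divMap ψ g) h) = ψ h := map_conj_of_commute_s12 hψ _ _
  rw [circleMul_eq_conj_mul ψ g h, braiding, circleMul, divMap, map_fst, MulAut.conj_apply (ψ h)]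
  group

theorem isYangBaxterSolution_braiding : IsYangBaxterSolution (braiding ψ) :=
  isYangBaxterSolution_of_actions (op := circleMul ψ)
    (l := fun g h => MulAut.conj (divMap ψ g) h) (r := fun g h => MulAut.conj (ψ h) g)
    (circleMul_assoc hψ) (circleMul_left_injective hψ) (circleMul_right_injective ψ)
    (fun g h k => by rw [divMap_circleMul hψ, map_mul, MulAut.mul_apply])
    (fun g h k => by rw [map_circleMul hψ, map_mul, MulAut.mul_apply])
    (circleMul_braiding hψ)

theorem leftInverse_braidingInv : LeftInverse (braidingInv ψ) (braiding ψ) := fun p => by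
  simp only [braidingInv, braiding, map_conj_of_commute_s12 hψ, map_inv, MulAut.inv_apply_self]

theorem rightInverse_braidingInv : RightInverse (braidingInv ψ) (braiding ψ) := fun p => by
  simp only [braidingInv, braiding, map_conj_of_commute_s12 hψ]
  simp only [map_inv, MulAut.apply_inv_self]

end AbelianEndomorphism

/-- For an abelian endomorphism `ψ` of a group `G`, the maps
`R₁(g,h) = (ψ(g⁻¹) h ψ(g), ψ(hg⁻¹) h⁻¹ ψ(g) g ψ(g⁻¹) h ψ(gh⁻¹))` and
`R₂(g,h) = (g ψ(g⁻¹) h ψ(g) g⁻¹, ψ(h) g ψ(h⁻¹))` are set-theoretic solutions of the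
Yang–Baxter equation and are mutually inverse. -/
theorem R1_R2_yang_baxter {G : Type*} [Group G]
    (ψ : G →* G) (hab : ∀ x y : G, ψ x * ψ y = ψ y * ψ x)
    (R₁ R₂ : G × G → G × G)
    (hR₁ : ∀ g h : G, R₁ (g, h) =
      (ψ (g⁻¹) * h * ψ g,
        ψ (h * g⁻¹) * h⁻¹ * ψ g * g * ψ (g⁻¹) * h * ψ (g * h⁻¹)))
    (hR₂ : ∀ g h : G, R₂ (g, h) =
      (g * ψ (g⁻¹) * h * ψ g * g⁻¹, ψ h * g * ψ (h⁻¹))) :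
    IsYangBaxterSolution R₁ ∧ IsYangBaxterSolution R₂ ∧
    R₁ ∘ R₂ = id ∧ R₂ ∘ R₁ = id := by
  have hψ : ∀ x y, Commute (ψ x) (ψ y) := hab
  obtain rfl : R₁ = braidingInv ψ := by
    funext ⟨g, h⟩
    have map_fst : ψ (MulAut.conj (ψ g)⁻¹ h) = ψ h := map_conj_of_commute_s12 hψ _ _
    simp only [hR₁, braidingInv, divMap, map_fst]
    simp only [MulAut.conj_apply, ψ.map_mul, ψ.map_inv, mul_inv_rev, inv_inv, mul_assoc]
  obtain rfl : R₂ = braiding ψ := by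
    funext ⟨g, h⟩
    simp only [hR₂, braiding, divMap, MulAut.conj_apply, ψ.map_inv, mul_inv_rev, inv_inv, mul_assoc]
  have left := leftInverse_braidingInv hψ
  have right := rightInverse_braidingInv hψ
  have solution := isYangBaxterSolution_braiding hψ
  exact ⟨solution.of_inverse left right, solution, left.comp_eq_id, right.comp_eq_id⟩
end
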